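/- Let n ≥ 3 and let ψ ∈ C(𝔹ⁿ,ℝⁿ) satisfy |ψ(x)| ≤ M(1−|x|²) for all x ∈ 𝔹ⁿ, where M ≥ 0 is a constant, and set Ψ = G_h[ψ]. Then for every x ∈ 𝔹ⁿ and every k ∈ {1,…,n}, the partial derivative ∂Ψ/∂x_k(x) exists and ∂Ψ/∂x_k(x) = ∫_{𝔹ⁿ} (∂G_h/∂x_k)(x,y) ψ(y) dτ(y). -/

import Mathlib

open MeasureTheory Metric Set

noncomputable section

/-- The open unit ball setting: Euclidean n-space. -/
abbrev En (n : ℕ) := EuclideanSpace ℝ (Fin n)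

/-- Lebesgue volume measure normalized so that the unit ball has measure 1. -/
def nuMeasure (n : ℕ) : Measure (En n) :=
  (volume (ball (0 : En n) 1))⁻¹ • (volume : Measure (En n))

/-- The Möbius invariant measure `dτ(x) = dν(x)/(1-|x|²)ⁿ`. -/
def tauMeasure (n : ℕ) : Measure (En n) :=
  (nuMeasure n).withDensity fun x => ENNReal.ofReal ((1 - ‖x‖ ^ 2) ^ n)⁻¹

/-- The surface measure on the unit sphere, normalized so that the sphere has measure 1. -/
def sigmaMeasure (n : ℕ) : Measure (sphere (0 : En n) 1) :=
  ((volume : Measure (En n)).toSphere univ)⁻¹ • (volume : Measure (En n)).toSphere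

/-- `[a,x]` via the identity `[a,x]² = |x-a|² + (1-|x|²)(1-|a|²)`. -/
def qbracket {n : ℕ} (a x : En n) : ℝ :=
  Real.sqrt (‖x - a‖ ^ 2 + (1 - ‖x‖ ^ 2) * (1 - ‖a‖ ^ 2))

/-- The Möbius transformation `φ_a` of the unit ball with `φ_a(a) = 0`, `φ_a(0) = a`. -/
def mobius {n : ℕ} (a x : En n) : En n :=
  (qbracket a x ^ 2)⁻¹ • (‖x - a‖ ^ 2 • a - (1 - ‖a‖ ^ 2) • (x - a))

/-- `g(r) = (1/n) ∫_r^1 (1-s²)^{n-2} s^{-(n-1)} ds`. -/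
def gfun (n : ℕ) (r : ℝ) : ℝ :=
  (1 / (n : ℝ)) * ∫ s in r..(1 : ℝ), (1 - s ^ 2) ^ (n - 2) / s ^ (n - 1)

/-- The hyperbolic Green function `G_h(x,y) = g(|φ_x(y)|)`. -/
def Gh (n : ℕ) (x y : En n) : ℝ := gfun n ‖mobius x y‖

/-- The Green integral `G_h[ψ](x) = ∫_{𝔹ⁿ} G_h(x,y) ψ(y) dτ(y)`. -/
def GhInt (n : ℕ) (ψ : En n → En n) (x : En n) : En n :=
  ∫ y in ball (0 : En n) 1, Gh n x y • ψ y ∂(tauMeasure n)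

/-- The Poisson–Szegő kernel `P_h(x,ξ) = ((1-|x|²)/|ξ-x|²)^{n-1}`. -/
def Ph (n : ℕ) (x : En n) (ξ : sphere (0 : En n) 1) : ℝ :=
  ((1 - ‖x‖ ^ 2) / ‖(ξ : En n) - x‖ ^ 2) ^ (n - 1)

/-- The Poisson integral `P_h[φ](x) = ∫_{𝕊ⁿ⁻¹} P_h(x,ξ) φ(ξ) dσ(ξ)`. -/
def PhInt (n : ℕ) (φ : En n → En n) (x : En n) : En n :=
  ∫ ξ, Ph n x ξ • φ (ξ : En n) ∂(sigmaMeasure n)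

/-- The `i`-th standard basis vector. -/
def basisE (n : ℕ) (i : Fin n) : En n := EuclideanSpace.single i 1

/-- The Euclidean Laplacian of a vector-valued function. -/
def lap {n : ℕ} (u : En n → En n) (x : En n) : En n :=
  ∑ i : Fin n, fderiv ℝ (fun y => fderiv ℝ u y (basisE n i)) x (basisE n i)

/-- The hyperbolic Laplacian
`Δ_h u(x) = (1-|x|²)² Δu(x) + 2(n-2)(1-|x|²) Σᵢ xᵢ ∂u/∂xᵢ(x)`. -/
def hypLap (n : ℕ) (u : En n → En n) (x : En n) : En n :=
  (1 - ‖x‖ ^ 2) ^ 2 • lap u x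
    + (2 * ((n : ℝ) - 2) * (1 - ‖x‖ ^ 2)) • ∑ i : Fin n, x i • fderiv ℝ u x (basisE n i)

/-- Pochhammer symbol `(a)_k`. -/
def poch (a : ℝ) (k : ℕ) : ℝ := (ascPochhammer ℝ k).eval a

/-- Gauss hypergeometric series `F(a,b;c;s)`. -/
def hyperF (a b c s : ℝ) : ℝ :=
  ∑' k : ℕ, poch a k * poch b k / ((k.factorial : ℝ) * poch c k) * s ^ k

/-- A majorant: continuous, increasing, `ω(0)=0`, with `ω(t)/t` non-increasing. -/
def IsMajorant (ω : ℝ → ℝ) : Prop :=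
  ContinuousOn ω (Ici 0) ∧ MonotoneOn ω (Ici 0) ∧ ω 0 = 0 ∧
    (∀ x ∈ Ici (0:ℝ), 0 ≤ ω x) ∧
    ∀ s t : ℝ, 0 < s → s ≤ t → ω t / t ≤ ω s / s

/-- A fast majorant: `∫₀^ρ ω(t)/t dt ≤ C ω(ρ)` for small `ρ`. -/
def IsFastMajorant (ω : ℝ → ℝ) : Prop :=
  IsMajorant ω ∧ ∃ ρ₀ > (0:ℝ), ∃ C : ℝ,
    ∀ ρ : ℝ, 0 < ρ → ρ < ρ₀ → (∫ t in (0:ℝ)..ρ, ω t / t) ≤ C * ω ρ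

end

/-!
Differentiation of the Green integral under the integral sign, by dominated convergence applied to
the difference quotients.

Since `|φ_a(y)| = |y - a| / [a, y]` (`norm_mobius`), for poles `a` in a fixed smaller ball the kernel
satisfies, with `c = 1 - |y|²`,
* `|G_h(a, y)| ≤ C c^{n-1} |y - a|^{2-n}` (`abs_Gh_le`), and
* `|∂_v G_h(a, y)| ≤ C c^{n-1} |y - a|^{1-n}` for unit vectors `v` (`exists_hasDerivAt_Gh`).

The factor `c^{n-1}` together with `|ψ(y)| ≤ M c` cancels the density `c^{-n}` of `τ`, so that only the
singularity at the pole matters. The supremum of `|y - (x + t e_k)|^{1-n}` over `t` is not integrable: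
it is the distance of `y` to a line, to the power `1 - n`. The difference quotients
`(G_h(x + t e_k, y) - G_h(x, y)) / t` with one end fixed at `x` do have an integrable majorant. Put
`q = |y - x|`. If `|t| ≤ q / 2`, the mean value inequality bounds the quotient by a multiple of
`c^{n-1} q^{1-n}`. If `|t| > q / 2`, the two values are estimated separately and the quotient is at
most a multiple of `c^{n-1} p^{2-n} q^{-1}`, where `p` is the smaller of `q` and `|y - (x + t e_k)|`.
Here `p` dominates all coordinates of `y - x` except the `k`-th, and `q` dominates every coordinate;
sharing out the powers equally gives in both cases the bound
`∏ⱼ |yⱼ - xⱼ|^{-(1 - 1/n)}` (`inv_le_maj`, `abs_Gh_line_sub_le`). This is a product of locally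
integrable functions of one variable, hence integrable on the ball (`integrableOn_maj`).
-/

/-! ### The radial function `g` -/

lemma continuousOn_gIntegrand (n : ℕ) :
    ContinuousOn (fun s : ℝ => (1 - s ^ 2) ^ (n - 2) / s ^ (n - 1)) (Ioi 0) :=
  ContinuousOn.div (by fun_prop) (by fun_prop) fun s hs => pow_ne_zero _ (ne_of_gt hs)

lemma hasDerivAt_gfun (n : ℕ) {r : ℝ} (hr : 0 < r) :
    HasDerivAt (gfun n) (-((1 / (n : ℝ)) * ((1 - r ^ 2) ^ (n - 2) / r ^ (n - 1)))) r := by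
  have hc := continuousOn_gIntegrand n
  have hsub : uIcc r 1 ⊆ Ioi (0 : ℝ) := fun s hs =>
    lt_of_lt_of_le (lt_min hr one_pos) hs.1
  have h := intervalIntegral.integral_hasDerivAt_left (hc.mono hsub).intervalIntegrable
    (hc.stronglyMeasurableAtFilter isOpen_Ioi r hr) (hc.continuousAt (Ioi_mem_nhds hr))
  have h2 := h.const_mul (1 / (n : ℝ))
  rw [mul_neg] at h2
  exact h2

/-- The pointwise bound `g(r) ≤ (1 - r²)^{n-1} r^{2-n}`: the first factor gives the decay at the
boundary, the second the order of the singularity at the pole. -/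
lemma abs_gfun_le {n : ℕ} (hn : 3 ≤ n) {r : ℝ} (hr : 0 < r) (hr1 : r ≤ 1) :
    |gfun n r| ≤ (1 - r ^ 2) ^ (n - 1) / r ^ (n - 2) := by
  obtain ⟨m, rfl⟩ : ∃ m, n = m + 3 := ⟨n - 3, by omega⟩
  have e1 : m + 3 - 1 = m + 2 := by omega
  have e2 : m + 3 - 2 = m + 1 := by omega
  have hr2 : 0 ≤ 1 - r ^ 2 := by nlinarith
  have hsub : uIcc r 1 ⊆ Ioi (0 : ℝ) := fun s hs =>
    lt_of_lt_of_le (lt_min hr one_pos) hs.1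
  have hinv : ContinuousOn (fun s : ℝ => (s ^ 2)⁻¹) (uIcc r 1) :=
    ContinuousOn.inv₀ (by fun_prop) fun s hs => pow_ne_zero _ (ne_of_gt (hsub hs))
  have hI : ∫ s in r..(1 : ℝ), (s ^ 2)⁻¹ = r⁻¹ - 1 := by
    rw [intervalIntegral.integral_eq_sub_of_hasDerivAt (f := fun s => -s⁻¹) _
      hinv.intervalIntegrable]
    · simp; ring
    · intro s hs
      have h := (hasDerivAt_inv (𝕜 := ℝ) (ne_of_gt (hsub hs))).fun_neg
      rwa [neg_neg] at h
  -- On `[r, 1]` the integrand is at most `(1 - r²)^{n-2} r^{3-n} s^{-2}`.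
  have hle : ‖∫ s in r..(1 : ℝ), (1 - s ^ 2) ^ (m + 1) / s ^ (m + 2)‖ ≤
      ∫ s in r..(1 : ℝ), ((1 - r ^ 2) ^ (m + 1) / r ^ m) * (s ^ 2)⁻¹ := by
    refine intervalIntegral.norm_integral_le_of_norm_le hr1 (Filter.Eventually.of_forall ?_)
      (hinv.intervalIntegrable.const_mul _)
    intro s hs
    have hs0 : 0 < s := hr.trans hs.1
    have hs2 : 0 ≤ 1 - s ^ 2 := by nlinarith [hs.2]
    rw [Real.norm_of_nonneg (by positivity), ← div_eq_mul_inv, div_div, pow_add s m 2]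
    have : r ≤ s := hs.1.le
    gcongr
  rw [intervalIntegral.integral_const_mul, hI] at hle
  have hN : |1 / ((m + 3 : ℕ) : ℝ)| ≤ 1 := by
    rw [abs_of_nonneg (by positivity), div_le_one (by positivity)]
    push_cast; linarith [Nat.cast_nonneg (α := ℝ) m]
  unfold gfun
  rw [e1, e2, abs_mul]
  refine (mul_le_of_le_one_left (abs_nonneg _) hN).trans (hle.trans ?_)
  have e3 : (1 - r ^ 2) ^ (m + 1) / r ^ m * (r⁻¹ - 1)
      = ((1 - r ^ 2) ^ (m + 1) / r ^ (m + 1)) * (1 - r) := by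
    field_simp
    ring
  have e4 : (1 - r ^ 2) ^ (m + 2) / r ^ (m + 1)
      = ((1 - r ^ 2) ^ (m + 1) / r ^ (m + 1)) * (1 - r ^ 2) := by
    field_simp; ring
  rw [e3, e4]
  exact mul_le_mul_of_nonneg_left (by nlinarith) (by positivity)

/-! ### The norm of the Möbius transformation -/

/-- The square of `[a, y]`. -/
noncomputable def brSq {n : ℕ} (a y : En n) : ℝ := ‖y - a‖ ^ 2 + (1 - ‖y‖ ^ 2) * (1 - ‖a‖ ^ 2)

lemma brSq_eq {n : ℕ} (a y : En n) :
    brSq a y = 1 - 2 * inner ℝ y a + ‖y‖ ^ 2 * ‖a‖ ^ 2 := by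
  unfold brSq
  rw [norm_sub_sq_real]; ring

lemma le_brSq {n : ℕ} {a y : En n} {R : ℝ} (hR : R < 1) (ha : ‖a‖ ≤ R) (hy : ‖y‖ ≤ 1) :
    (1 - R) ^ 2 ≤ brSq a y := by
  rw [brSq_eq]
  have h := real_inner_le_norm y a
  have h2 : ‖y‖ * ‖a‖ ≤ R :=
    (mul_le_of_le_one_left (norm_nonneg _) hy).trans ha
  have h3 : 0 ≤ ‖y‖ * ‖a‖ := by positivity
  nlinarith

lemma brSq_le {n : ℕ} {a y : En n} (ha : ‖a‖ ≤ 1) (hy : ‖y‖ ≤ 1) : brSq a y ≤ 4 := by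
  rw [brSq_eq]
  have h := neg_le_of_abs_le (abs_real_inner_le_norm y a)
  have h2 : ‖y‖ * ‖a‖ ≤ 1 := mul_le_one₀ hy (norm_nonneg _) ha
  have h3 : 0 ≤ ‖y‖ * ‖a‖ := by positivity
  nlinarith

/-- `|φ_a(y)| = |y - a| / [a, y]`. -/
lemma norm_mobius {n : ℕ} {a y : En n} (h : 0 < brSq a y) :
    ‖mobius a y‖ = Real.sqrt (‖y - a‖ ^ 2 / brSq a y) := by
  have hq : qbracket a y ^ 2 = brSq a y := Real.sq_sqrt h.le
  have hn : ‖‖y - a‖ ^ 2 • a - (1 - ‖a‖ ^ 2) • (y - a)‖ ^ 2 = ‖y - a‖ ^ 2 * brSq a y := by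
    rw [norm_sub_sq_real, norm_smul, norm_smul, inner_smul_left, inner_smul_right, inner_sub_right,
      mul_pow, mul_pow, brSq_eq, real_inner_comm y a, real_inner_self_eq_norm_sq]
    simp only [Real.norm_eq_abs, sq_abs, conj_trivial]
    rw [norm_sub_sq_real]
    ring
  rw [← Real.sqrt_sq (norm_nonneg (mobius a y))]
  congr 1
  unfold mobius
  rw [norm_smul, mul_pow, hn, hq, Real.norm_eq_abs, sq_abs]
  field_simp

/-! ### Estimates for the kernel -/

section Kernel

variable {n : ℕ} {a y : En n} {R : ℝ}

lemma one_sub_norm_mobius_sq (h : 0 < brSq a y) :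
    1 - ‖mobius a y‖ ^ 2 = (1 - ‖a‖ ^ 2) * (1 - ‖y‖ ^ 2) / brSq a y := by
  rw [norm_mobius h, Real.sq_sqrt (by positivity)]
  rw [eq_div_iff h.ne', sub_mul, div_mul_cancel₀ _ h.ne']
  unfold brSq
  ring

lemma norm_mobius_estimates (hR : R < 1) (ha : ‖a‖ ≤ R) (hy : ‖y‖ < 1) (hya : y ≠ a) :
    ‖y - a‖ / 2 ≤ ‖mobius a y‖ ∧ 0 < ‖mobius a y‖ ∧ ‖mobius a y‖ ≤ 1 ∧
      1 - ‖mobius a y‖ ^ 2 ≤ (1 - ‖y‖ ^ 2) * ((1 - R) ^ 2)⁻¹ := by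
  have hB := le_brSq hR ha hy.le
  have hB4 := brSq_le (ha.trans hR.le) hy.le
  have hR2 : 0 < (1 - R) ^ 2 := pow_pos (by linarith) 2
  have hB0 : 0 < brSq a y := hR2.trans_le hB
  have hd : 0 < ‖y - a‖ := norm_pos_iff.2 (sub_ne_zero.2 hya)
  have hlow : ‖y - a‖ / 2 ≤ ‖mobius a y‖ := by
    rw [norm_mobius hB0]
    apply Real.le_sqrt_of_sq_le
    rw [div_pow]
    gcongr
    linarith
  have h1 := one_sub_norm_mobius_sq hB0
  have hc : 0 ≤ 1 - ‖y‖ ^ 2 := by nlinarith [norm_nonneg y]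
  have hc' : 0 ≤ 1 - ‖a‖ ^ 2 := by nlinarith [norm_nonneg a]
  refine ⟨hlow, by linarith, ?_, ?_⟩
  · have : 0 ≤ 1 - ‖mobius a y‖ ^ 2 := by rw [h1]; positivity
    nlinarith [norm_nonneg (mobius a y)]
  · rw [h1, div_eq_mul_inv]
    gcongr
    exact mul_le_of_le_one_left hc (by nlinarith [norm_nonneg a])

/-- A constant for which both kernel estimates hold when the pole stays in the closed ball of
radius `R`. -/
noncomputable def kerC (n : ℕ) (R : ℝ) : ℝ := 6 * 2 ^ (n - 1) * (((1 - R) ^ 2)⁻¹) ^ n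

lemma kerC_nonneg : 0 ≤ kerC n R := by unfold kerC; positivity

lemma abs_Gh_le (hn : 3 ≤ n) (hR : R < 1) (ha : ‖a‖ ≤ R) (hy : ‖y‖ < 1) (hya : y ≠ a) :
    |Gh n a y| ≤ kerC n R * (1 - ‖y‖ ^ 2) ^ (n - 1) / ‖y - a‖ ^ (n - 2) := by
  obtain ⟨h1, h2, h3, h4⟩ := norm_mobius_estimates hR ha hy hya
  have hd : 0 < ‖y - a‖ := norm_pos_iff.2 (sub_ne_zero.2 hya)
  have hc : 0 ≤ 1 - ‖y‖ ^ 2 := by nlinarith [norm_nonneg y]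
  have hr0 : 0 ≤ 1 - ‖mobius a y‖ ^ 2 := by nlinarith
  have hD : 1 ≤ ((1 - R) ^ 2)⁻¹ := by
    rw [one_le_inv₀ (pow_pos (by linarith) 2)]
    nlinarith [norm_nonneg a]
  set D := ((1 - R) ^ 2)⁻¹
  calc |Gh n a y| ≤ (1 - ‖mobius a y‖ ^ 2) ^ (n - 1) / ‖mobius a y‖ ^ (n - 2) :=
        abs_gfun_le hn h2 h3
    _ ≤ ((1 - ‖y‖ ^ 2) * D) ^ (n - 1) / (‖y - a‖ / 2) ^ (n - 2) := by gcongr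
    _ = (2 ^ (n - 2) * D ^ (n - 1)) * (1 - ‖y‖ ^ 2) ^ (n - 1) / ‖y - a‖ ^ (n - 2) := by
        rw [mul_pow, div_pow]; field_simp
    _ ≤ kerC n R * (1 - ‖y‖ ^ 2) ^ (n - 1) / ‖y - a‖ ^ (n - 2) := by
        gcongr
        unfold kerC
        have e1 : (2 : ℝ) ^ (n - 2) ≤ 2 ^ (n - 1) := pow_le_pow_right₀ (by norm_num) (by omega)
        have e2 : D ^ (n - 1) ≤ D ^ n := pow_le_pow_right₀ hD (by omega)
        calc (2 : ℝ) ^ (n - 2) * D ^ (n - 1) ≤ 2 ^ (n - 1) * D ^ n := by gcongr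
          _ ≤ 6 * 2 ^ (n - 1) * D ^ n := by
            have : 0 ≤ (2 : ℝ) ^ (n - 1) * D ^ n := by positivity
            linarith

/-- The kernel is differentiable in its pole along a line avoiding `y`, with derivative
`O((1 - |y|²)^{n-1} |y - a|^{1-n})`. The factor `1 - |y|²` and the factor `|y - a|` in the derivative
of `|φ_a(y)|²` both come from the cancellation in the quotient rule. -/
lemma exists_hasDerivAt_Gh (hn : 3 ≤ n) (hR : R < 1) {x v : En n} (hv : ‖v‖ = 1) {t : ℝ}
    (ha : ‖x + t • v‖ ≤ R) (hy : ‖y‖ < 1) (hya : y ≠ x + t • v) :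
    ∃ G' : ℝ, HasDerivAt (fun s : ℝ => Gh n (x + s • v) y) G' t ∧
      |G'| ≤ kerC n R * (1 - ‖y‖ ^ 2) ^ (n - 1) / ‖y - (x + t • v)‖ ^ (n - 1) := by
  obtain ⟨h1, h2, h3, h4⟩ := norm_mobius_estimates hR ha hy hya
  have hB := le_brSq hR ha hy.le
  have hd : 0 < ‖y - (x + t • v)‖ := norm_pos_iff.2 (sub_ne_zero.2 hya)
  have hc : 0 ≤ 1 - ‖y‖ ^ 2 := by nlinarith [norm_nonneg y]
  have hr0 : 0 ≤ 1 - ‖mobius (x + t • v) y‖ ^ 2 := by nlinarith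
  have hR2 : 0 < (1 - R) ^ 2 := pow_pos (by linarith) 2
  have hB0 : 0 < brSq (x + t • v) y := hR2.trans_le hB
  have hline : HasDerivAt (fun s : ℝ => x + s • v) v t := by
    simpa using ((hasDerivAt_id t).smul_const v).const_add x
  have hA : HasDerivAt (fun s : ℝ => ‖y - (x + s • v)‖ ^ 2)
      (2 * inner ℝ (y - (x + t • v)) (-v)) t := (hline.const_sub y).norm_sq
  have hN : HasDerivAt (fun s : ℝ => ‖x + s • v‖ ^ 2) (2 * inner ℝ (x + t • v) v) t :=
    hline.norm_sq
  have hBd : HasDerivAt (fun s : ℝ => brSq (x + s • v) y)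
      (2 * inner ℝ (y - (x + t • v)) (-v) + (1 - ‖y‖ ^ 2) * (-(2 * inner ℝ (x + t • v) v))) t :=
    hA.add ((hN.const_sub 1).const_mul _)
  have hu := hA.div hBd hB0.ne'
  have hr : ‖mobius (x + t • v) y‖ = _ := norm_mobius hB0
  have hu0 : 0 < ‖y - (x + t • v)‖ ^ 2 / brSq (x + t • v) y := by positivity
  have hs := hu.sqrt hu0.ne'
  have hg := HasDerivAt.comp t (h₂ := gfun n) (by
    have := hasDerivAt_gfun n h2
    rw [hr] at this
    exact this) hs
  refine ⟨_, hg.congr_of_eventuallyEq ?_, ?_⟩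
  · filter_upwards [hBd.continuousAt.eventually (lt_mem_nhds hB0)] with s hs
    simp only [Gh, norm_mobius hs, Function.comp, Pi.div_apply]
  · simp only [Pi.div_apply]
    rw [← hr]
    set r := ‖mobius (x + t • v) y‖
    set z := x + t • v
    set d := ‖y - z‖
    set B := brSq z y with hBdef
    set c := 1 - ‖y‖ ^ 2 with hcdef
    set D := ((1 - R) ^ 2)⁻¹ with hD
    have hz1 : ‖z‖ ≤ 1 := ha.trans hR.le
    have hd2 : d ≤ 2 := by
      have := norm_sub_le y z
      linarith
    have hi1 : |inner ℝ (y - z) (-v)| ≤ d := by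
      simpa [hv] using abs_real_inner_le_norm (y - z) (-v)
    have hi2 : |inner ℝ z v| ≤ 1 := by
      have := abs_real_inner_le_norm z v
      rw [hv, mul_one] at this
      linarith
    -- The terms without a factor `1 - |y|²` cancel in the numerator.
    have hnum : 2 * inner ℝ (y - z) (-v) * B
          - d ^ 2 * (2 * inner ℝ (y - z) (-v) + c * (-(2 * inner ℝ z v)))
        = c * (2 * inner ℝ (y - z) (-v) * (1 - ‖z‖ ^ 2) + 2 * d ^ 2 * inner ℝ z v) := by
      rw [hBdef, brSq]; ring
    have hz0 : |1 - ‖z‖ ^ 2| ≤ 1 := by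
      rw [abs_le]; constructor <;> nlinarith [norm_nonneg z]
    have hnb : |2 * inner ℝ (y - z) (-v) * (1 - ‖z‖ ^ 2) + 2 * d ^ 2 * inner ℝ z v| ≤ 6 * d := by
      refine (abs_add_le _ _).trans ?_
      rw [abs_mul, abs_mul, abs_mul, abs_mul, abs_two, abs_of_nonneg (sq_nonneg d)]
      have k1 : |inner ℝ (y - z) (-v)| * |1 - ‖z‖ ^ 2| ≤ d * 1 := by gcongr
      have k2 : d ^ 2 * |inner ℝ z v| ≤ d ^ 2 * 1 := by gcongr
      nlinarith
    have hBD : B⁻¹ ≤ D := inv_anti₀ hR2 hB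
    have hquot : |(2 * inner ℝ (y - z) (-v) * B
          - d ^ 2 * (2 * inner ℝ (y - z) (-v) + c * (-(2 * inner ℝ z v)))) / B ^ 2|
        ≤ c * (6 * d) * D ^ 2 := by
      rw [hnum, abs_div, abs_mul, abs_of_nonneg hc, abs_of_nonneg (sq_nonneg B), div_eq_mul_inv,
        ← inv_pow]
      gcongr
    have hNn : |1 / (n : ℝ)| ≤ 1 := by
      rw [abs_of_nonneg (by positivity), div_le_one (by positivity)]
      exact_mod_cast (by omega : 1 ≤ n)
    have hgb : |(-((1 / (n : ℝ)) * ((1 - r ^ 2) ^ (n - 2) / r ^ (n - 1))))|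
        ≤ (c * D) ^ (n - 2) / (d / 2) ^ (n - 1) := by
      rw [abs_neg, abs_mul]
      refine (mul_le_of_le_one_left (abs_nonneg _) hNn).trans ?_
      rw [abs_of_nonneg (by positivity)]
      gcongr
    rw [abs_mul, abs_div, abs_of_pos (by positivity : 0 < 2 * r)]
    calc _ ≤ (c * D) ^ (n - 2) / (d / 2) ^ (n - 1) * ((c * (6 * d) * D ^ 2) / (2 * (d / 2))) := by
          gcongr
      _ = kerC n R * c ^ (n - 1) / d ^ (n - 1) := by
          obtain ⟨m, rfl⟩ : ∃ m, n = m + 3 := ⟨n - 3, by omega⟩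
          have e1 : m + 3 - 1 = m + 2 := by omega
          have e2 : m + 3 - 2 = m + 1 := by omega
          rw [kerC, ← hD, e1, e2, mul_pow, div_pow]
          field_simp
          ring

end Kernel

/-! ### The integrable majorant -/

section Majorant

/-- The majorant `∏ⱼ |yⱼ - xⱼ|^{-(1 - 1/n)}` of the difference quotients. -/
noncomputable def maj {n : ℕ} (x y : En n) : ℝ := ∏ j, |y j - x j| ^ (-(1 - 1 / (n : ℝ)))

lemma maj_nonneg {n : ℕ} (x y : En n) : 0 ≤ maj x y :=
  Finset.prod_nonneg fun _ _ => Real.rpow_nonneg (abs_nonneg _) _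

/-- If `p ≤ q`, `p` dominates every coordinate of `y - x` but the `k`-th, and `q` dominates all of
them, then `p^{2-n} q^{-1}` is at most the majorant. -/
lemma inv_le_maj {n : ℕ} (hn : 2 ≤ n) {x y : En n} (hne : ∀ j, y j ≠ x j) (k : Fin n) {p q : ℝ}
    (hp : 0 < p) (hpq : p ≤ q) (h1 : ∀ j, j ≠ k → |y j - x j| ≤ p) (h2 : |y k - x k| ≤ q) :
    (p ^ (n - 2) * q)⁻¹ ≤ maj x y := by
  have hpos : ∀ j, 0 < |y j - x j| := fun j => abs_pos.2 (sub_ne_zero.2 (hne j))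
  have hq : 0 < q := hp.trans_le hpq
  have hn0 : (0 : ℝ) < n := by positivity
  set α : ℝ := 1 - 1 / (n : ℝ) with hα
  have hα0 : 0 ≤ α := by
    rw [hα, sub_nonneg, div_le_one hn0]
    exact_mod_cast (by omega : 1 ≤ n)
  have hmaj : maj x y = (∏ j, |y j - x j| ^ α)⁻¹ := by
    rw [maj, ← Finset.prod_inv_distrib]
    exact Finset.prod_congr rfl fun j _ => Real.rpow_neg (hpos j).le _
  rw [hmaj]
  refine inv_anti₀ (Finset.prod_pos fun j _ => Real.rpow_pos_of_pos (hpos j) _) ?_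
  rw [← Finset.mul_prod_erase _ _ (Finset.mem_univ k)]
  have hprod : ∏ j ∈ Finset.univ.erase k, |y j - x j| ^ α ≤ (p ^ α) ^ (n - 1) := by
    calc _ ≤ ∏ j ∈ Finset.univ.erase k, p ^ α :=
          Finset.prod_le_prod (fun j _ => Real.rpow_nonneg (abs_nonneg _) _) fun j hj =>
            Real.rpow_le_rpow (abs_nonneg _) (h1 j (Finset.ne_of_mem_erase hj)) hα0
      _ = (p ^ α) ^ (n - 1) := by simp
  -- The exponents match: `(n - 1) α = (n - 2) + 1/n` and `1/n + α = 1`.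
  have hexp : (p ^ α) ^ (n - 1) = p ^ (n - 2) * p ^ (1 / (n : ℝ)) := by
    rw [← Real.rpow_mul_natCast hp.le, ← Real.rpow_natCast p (n - 2), ← Real.rpow_add hp]
    congr 1
    rw [hα, Nat.cast_sub (by omega), Nat.cast_sub hn]
    field_simp
    push_cast
    ring
  have hqq : q ^ α * q ^ (1 / (n : ℝ)) = q := by
    rw [← Real.rpow_add hq, hα, sub_add_cancel, Real.rpow_one]
  calc |y k - x k| ^ α * ∏ j ∈ Finset.univ.erase k, |y j - x j| ^ α
      ≤ q ^ α * (p ^ (n - 2) * p ^ (1 / (n : ℝ))) := by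
        rw [← hexp]
        have := Real.rpow_le_rpow (abs_nonneg _) h2 hα0
        have h0 : 0 ≤ ∏ j ∈ Finset.univ.erase k, |y j - x j| ^ α :=
          Finset.prod_nonneg fun _ _ => Real.rpow_nonneg (abs_nonneg _) _
        gcongr
    _ ≤ q ^ α * (p ^ (n - 2) * q ^ (1 / (n : ℝ))) := by
        gcongr
    _ = p ^ (n - 2) * (q ^ α * q ^ (1 / (n : ℝ))) := by ring
    _ = p ^ (n - 2) * q := by rw [hqq]

lemma integrable_indicator_abs_rpow {r : ℝ} (hr : -1 < r) (b : ℝ) :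
    Integrable ((Icc (b - 2) (b + 2)).indicator fun s : ℝ => |s - b| ^ r) := by
  have h0 : IntervalIntegrable (fun s : ℝ => |s| ^ r) volume 0 2 := by
    refine (intervalIntegral.intervalIntegrable_rpow' hr).congr ?_
    intro s hs
    rw [uIoc_of_le (by norm_num)] at hs
    simp [abs_of_pos hs.1]
  have h1 : IntervalIntegrable (fun s : ℝ => |s| ^ r) volume (-2) 0 := by
    have := (h0.comp_mul_left (c := -1)).symm
    simpa [div_neg] using this
  have h2 : IntervalIntegrable (fun s : ℝ => |s - b| ^ r) volume (b - 2) (b + 2) := by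
    have := (h1.trans h0).comp_sub_right b
    convert this using 1 <;> ring
  rw [integrable_indicator_iff measurableSet_Icc]
  exact (intervalIntegrable_iff_integrableOn_Icc_of_le (by linarith)).1 h2

lemma integrableOn_maj {n : ℕ} (hn : 2 ≤ n) {x : En n} (hx : x ∈ ball (0 : En n) 1) :
    IntegrableOn (maj x) (ball (0 : En n) 1) := by
  have hn0 : (0 : ℝ) < n := by positivity
  have hr : -1 < -(1 - 1 / (n : ℝ)) := by
    have : 0 < 1 / (n : ℝ) := by positivity
    linarith
  have h := Integrable.fintype_prod (μ := fun _ : Fin n => (volume : Measure ℝ))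
    fun j => integrable_indicator_abs_rpow hr (x j)
  have h2 := ((PiLp.volume_preserving_ofLp (Fin n)).integrable_comp_emb
    (MeasurableEquiv.toLp 2 (Fin n → ℝ)).symm.measurableEmbedding).2 h
  refine (h2.integrableOn (s := ball 0 1)).congr_fun ?_ measurableSet_ball
  intro y hy
  simp only [Function.comp, maj]
  refine Finset.prod_congr rfl fun j _ => indicator_of_mem ?_ _
  rw [mem_ball_zero_iff] at hx hy
  have h1 := (abs_le.1 ((PiLp.norm_apply_le y j).trans hy.le))
  have h2 := (abs_le.1 ((PiLp.norm_apply_le x j).trans hx.le))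
  constructor <;> linarith [h1.1, h1.2, h2.1, h2.2]

end Majorant

/-! ### Difference quotients of the kernel -/

section Quotient

variable {n : ℕ} {x y : En n} {R : ℝ}

lemma norm_basisE (k : Fin n) : ‖basisE n k‖ = 1 := by simp [basisE]

/-- For `a` on the line through `x` in direction `e_k`, the singularity `|y - a|^{2-n}` is bounded by
the majorant centred at `x`, uniformly in the position of `a` on the line. -/
lemma inv_dist_pow_le (hn : 2 ≤ n) (hne : ∀ j, y j ≠ x j) (k : Fin n) (t : ℝ) :
    0 < ‖y - (x + t • basisE n k)‖ ∧ 0 < ‖y - x‖ ∧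
    1 / ‖y - (x + t • basisE n k)‖ ^ (n - 2) ≤ ‖y - x‖ * maj x y := by
  have hco : ∀ j, j ≠ k → (y - (x + t • basisE n k)) j = y j - x j := by
    intro j hj
    simp [basisE, hj]
  have hco' : ∀ j, j ≠ k → |y j - x j| ≤ ‖y - (x + t • basisE n k)‖ := by
    intro j hj
    rw [← hco j hj]
    exact PiLp.norm_apply_le (y - (x + t • basisE n k)) j
  have hco'' : ∀ j, |y j - x j| ≤ ‖y - x‖ := fun j => PiLp.norm_apply_le (y - x) j
  have hpos : ∀ j, 0 < |y j - x j| := fun j => abs_pos.2 (sub_ne_zero.2 (hne j))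
  have : Nontrivial (Fin n) := Fin.nontrivial_iff_two_le.2 hn
  obtain ⟨j, hj⟩ := exists_ne k
  have hp := (hpos j).trans_le (hco' j hj)
  have hq := (hpos k).trans_le (hco'' k)
  refine ⟨hp, hq, ?_⟩
  have h := inv_le_maj hn hne k (lt_min hp hq) (min_le_right _ _)
    (fun i hi => le_min (hco' i hi) (hco'' i)) (hco'' k)
  rw [mul_inv, ← div_eq_mul_inv, div_le_iff₀ hq] at h
  rw [mul_comm]
  refine le_trans ?_ h
  rw [one_div]
  have h0 := lt_min hp hq
  apply inv_anti₀ (pow_pos h0 _)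
  gcongr
  exact min_le_left _ _

lemma norm_line_le (k : Fin n) {t : ℝ} (ht : |t| ≤ R - ‖x‖) : ‖x + t • basisE n k‖ ≤ R := by
  refine (norm_add_le _ _).trans ?_
  rw [norm_smul, norm_basisE, mul_one, Real.norm_eq_abs]
  linarith

lemma abs_Gh_line_le (hn : 3 ≤ n) (hR : R < 1) (hy : ‖y‖ < 1) (hne : ∀ j, y j ≠ x j) (k : Fin n)
    {t : ℝ} (ht : |t| ≤ R - ‖x‖) :
    |Gh n (x + t • basisE n k) y| ≤
      kerC n R * (1 - ‖y‖ ^ 2) ^ (n - 1) * (‖y - x‖ * maj x y) := by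
  obtain ⟨h1, -, h3⟩ := inv_dist_pow_le (by omega) hne k t
  have hc : 0 ≤ 1 - ‖y‖ ^ 2 := by nlinarith [norm_nonneg y]
  have hk := kerC_nonneg (n := n) (R := R)
  refine (abs_Gh_le hn hR (norm_line_le k ht) hy (sub_ne_zero.1 (norm_pos_iff.1 h1))).trans ?_
  rw [div_eq_mul_one_div]
  gcongr

/-- The difference quotients in direction `e_k` are bounded by the majorant, uniformly in the
step. -/
lemma abs_Gh_line_sub_le (hn : 3 ≤ n) (hR : R < 1) (hy : ‖y‖ < 1) (hne : ∀ j, y j ≠ x j)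
    (k : Fin n) {t : ℝ} (ht : |t| ≤ R - ‖x‖) :
    |Gh n (x + t • basisE n k) y - Gh n x y| ≤
      2 ^ n * kerC n R * (1 - ‖y‖ ^ 2) ^ (n - 1) * maj x y * |t| := by
  have hc : 0 ≤ 1 - ‖y‖ ^ 2 := by nlinarith [norm_nonneg y]
  have hk := kerC_nonneg (n := n) (R := R)
  have hm := maj_nonneg x y
  obtain ⟨-, hq, hq'⟩ := inv_dist_pow_le (by omega) hne k 0
  rw [zero_smul, add_zero] at hq'
  rcases le_total |t| (‖y - x‖ / 2) with h | h
  · -- Short steps: the segment stays at distance at least `|y - x| / 2` from `y`.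
    have hfar : ∀ s ∈ Icc (-|t|) |t|, ‖y - x‖ / 2 ≤ ‖y - (x + s • basisE n k)‖ := by
      intro s hs
      have h1 : ‖y - x‖ ≤ ‖y - (x + s • basisE n k)‖ + ‖s • basisE n k‖ := by
        have := norm_add_le (y - (x + s • basisE n k)) (s • basisE n k)
        rwa [← sub_sub, sub_add_cancel, sub_sub] at this
      rw [norm_smul, norm_basisE, mul_one, Real.norm_eq_abs] at h1
      linarith [abs_le.2 hs]
    have hex : ∀ s ∈ Icc (-|t|) |t|, ∃ G' : ℝ,
        HasDerivAt (fun s : ℝ => Gh n (x + s • basisE n k) y) G' s ∧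
        |G'| ≤ kerC n R * (1 - ‖y‖ ^ 2) ^ (n - 1) / (‖y - x‖ / 2) ^ (n - 1) := by
      intro s hs
      have hf := hfar s hs
      obtain ⟨G', h1, h2⟩ := exists_hasDerivAt_Gh hn hR (norm_basisE k)
        (norm_line_le k ((abs_le.2 hs).trans ht)) hy
        (sub_ne_zero.1 (norm_pos_iff.1 (by linarith)))
      exact ⟨G', h1, h2.trans (by gcongr)⟩
    choose! G' hG1 hG2 using hex
    have hmv := (convex_Icc (-|t|) |t|).norm_image_sub_le_of_norm_hasDerivWithin_le
      (fun s hs => (hG1 s hs).hasDerivWithinAt) hG2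
      (x := 0) (y := t) ⟨by simp, by simp⟩ (abs_le.1 le_rfl)
    simp only [zero_smul, add_zero, sub_zero, Real.norm_eq_abs] at hmv
    refine hmv.trans (mul_le_mul_of_nonneg_right ?_ (abs_nonneg t))
    have e : (‖y - x‖ / 2) ^ (n - 1) = ‖y - x‖ ^ (n - 2) * ‖y - x‖ / 2 ^ (n - 1) := by
      rw [div_pow, ← pow_succ]
      congr 2
      omega
    have h1 : 1 / (‖y - x‖ / 2) ^ (n - 1) ≤ 2 ^ (n - 1) * maj x y := by
      rw [e, one_div_div, div_le_iff₀ (by positivity), mul_assoc]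
      refine le_mul_of_one_le_right (by positivity) ?_
      rw [div_le_iff₀ (by positivity)] at hq'
      linarith
    have h2 : (2 : ℝ) ^ (n - 1) ≤ 2 ^ n := pow_le_pow_right₀ (by norm_num) (by omega)
    calc _ = kerC n R * (1 - ‖y‖ ^ 2) ^ (n - 1) * (1 / (‖y - x‖ / 2) ^ (n - 1)) :=
          div_eq_mul_one_div _ _
      _ ≤ kerC n R * (1 - ‖y‖ ^ 2) ^ (n - 1) * (2 ^ n * maj x y) := by
          have := mul_le_mul_of_nonneg_right h2 hm
          gcongr
          linarith
      _ = _ := by ring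
  · -- Long steps: both values are bounded separately, and `|y - x| ≤ 2 |t|`.
    have h1 := abs_Gh_line_le hn hR hy hne k ht
    have h2 := abs_Gh_line_le hn hR hy hne k (t := 0)
      (by rw [abs_zero]; exact (abs_nonneg t).trans ht)
    rw [zero_smul, add_zero] at h2
    have h4 : (4 : ℝ) ≤ 2 ^ n := by
      calc (4 : ℝ) = 2 ^ 2 := by norm_num
        _ ≤ 2 ^ n := pow_le_pow_right₀ (by norm_num) (by omega)
    have hX : 0 ≤ kerC n R * (1 - ‖y‖ ^ 2) ^ (n - 1) * maj x y := by positivity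
    calc _ ≤ |Gh n (x + t • basisE n k) y| + |Gh n x y| := abs_sub _ _
      _ ≤ (kerC n R * (1 - ‖y‖ ^ 2) ^ (n - 1) * maj x y) * (2 * ‖y - x‖) := by linarith
      _ ≤ (kerC n R * (1 - ‖y‖ ^ 2) ^ (n - 1) * maj x y) * (2 ^ n * |t|) := by
          refine mul_le_mul_of_nonneg_left ?_ hX
          nlinarith [abs_nonneg t]
      _ = _ := by ring

lemma continuousOn_Gh {a : En n} (ha : ‖a‖ < 1) :
    ContinuousOn (Gh n a) {y | ‖y‖ < 1 ∧ y ≠ a} := by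
  intro y hy
  have hB : 0 < brSq a y :=
    (pow_pos (by linarith : 0 < 1 - ‖a‖) 2).trans_le (le_brSq ha le_rfl hy.1.le)
  have hq : qbracket a y ^ 2 ≠ 0 := by
    rw [show qbracket a y ^ 2 = brSq a y from Real.sq_sqrt hB.le]
    exact hB.ne'
  have hm : ContinuousAt (fun z => ‖mobius a z‖) y := by
    unfold mobius
    have hqc : ContinuousAt (fun z => qbracket a z ^ 2) y := by
      unfold qbracket
      fun_prop
    have hqi : ContinuousAt (fun z => (qbracket a z ^ 2)⁻¹) y := hqc.inv₀ hq
    fun_prop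
  have hg := (hasDerivAt_gfun n (norm_mobius_estimates ha le_rfl hy.1 hy.2).2.1).continuousAt
  exact (ContinuousAt.comp (f := fun z => ‖mobius a z‖) hg hm).continuousWithinAt

end Quotient

/-! ### The invariant measure on the ball -/

section Measure

variable {n : ℕ}

lemma nuConst_ne_top : (volume (ball (0 : En n) 1))⁻¹ ≠ ⊤ :=
  ENNReal.inv_ne_top.2 (measure_ball_pos _ _ one_pos).ne'

lemma tau_restrict_ac : (tauMeasure n).restrict (ball 0 1) ≪ volume :=
  Measure.absolutelyContinuous_of_le Measure.restrict_le_self |>.trans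
    ((withDensity_absolutelyContinuous _ _).trans
      (Measure.smul_absolutelyContinuous))

/-- The weight `(1 - |y|²)ⁿ` cancels the density of `τ`. -/
lemma integrable_weight_mul_maj (hn : 2 ≤ n) {x : En n} (hx : x ∈ ball (0 : En n) 1) :
    Integrable (fun y => (1 - ‖y‖ ^ 2) ^ n * maj x y)
      ((tauMeasure n).restrict (ball 0 1)) := by
  rw [tauMeasure, restrict_withDensity measurableSet_ball,
    integrable_withDensity_iff_integrable_smul' (by fun_prop) (by simp), nuMeasure,
    Measure.restrict_smul]
  refine Integrable.smul_measure ?_ nuConst_ne_top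
  refine IntegrableOn.congr_fun (integrableOn_maj hn hx) ?_ measurableSet_ball
  intro y hy
  rw [mem_ball_zero_iff] at hy
  have hc : 0 < 1 - ‖y‖ ^ 2 := by nlinarith [norm_nonneg y]
  simp only [smul_eq_mul]
  rw [ENNReal.toReal_ofReal (by positivity), inv_mul_cancel_left₀ (by positivity)]

lemma ae_coord_ne (x : En n) :
    ∀ᵐ y ∂((tauMeasure n).restrict (ball 0 1)), ∀ j, y j ≠ x j := by
  refine tau_restrict_ac.ae_le ?_
  refine ae_all_iff.2 fun j => ?_
  have h : ∀ᵐ z : Fin n → ℝ, z j ≠ x j :=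
    Measure.ae_eval_ne (μ := fun _ : Fin n => (volume : Measure ℝ)) j (x j)
  exact (PiLp.volume_preserving_ofLp (Fin n)).quasiMeasurePreserving.ae h

end Measure

/-! ### Differentiation under the integral sign -/

/-- differentiation under the integral sign for `Ψ = G_h[ψ]`:
`∂Ψ/∂x_k(x) = ∫_{𝔹ⁿ} (∂G_h/∂x_k)(x,y) ψ(y) dτ(y)`. -/
theorem stmt_18 (n : ℕ) (hn : 3 ≤ n) (M : ℝ) (hM : 0 ≤ M) (ψ : En n → En n)
    (hψc : ContinuousOn ψ (ball (0 : En n) 1))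
    (hψb : ∀ x ∈ ball (0 : En n) 1, ‖ψ x‖ ≤ M * (1 - ‖x‖ ^ 2)) :
    ∀ x ∈ ball (0 : En n) 1, ∀ k : Fin n,
      HasDerivAt (fun t : ℝ => GhInt n ψ (x + t • basisE n k))
        (∫ y in ball (0 : En n) 1,
          (deriv (fun t : ℝ => Gh n (x + t • basisE n k) y) 0) • ψ y ∂(tauMeasure n)) 0 := by
  intro x hx k
  have hx1 : ‖x‖ < 1 := mem_ball_zero_iff.1 hx
  set μ := (tauMeasure n).restrict (ball 0 1) with hμ
  set R : ℝ := (1 + ‖x‖) / 2 with hRdef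
  have hR : R < 1 := by rw [hRdef]; linarith
  have hT : 0 < R - ‖x‖ := by rw [hRdef]; linarith
  have hk := kerC_nonneg (n := n) (R := R)
  -- Off the hyperplanes `yⱼ = xⱼ` the kernel is smooth along the whole line.
  have hS : ∀ᵐ y ∂μ, y ∈ {y : En n | ‖y‖ < 1 ∧ ∀ j, y j ≠ x j} := by
    filter_upwards [ae_restrict_mem measurableSet_ball, ae_coord_ne x] with y h1 h2
    exact ⟨mem_ball_zero_iff.1 h1, h2⟩
  have hSm : MeasurableSet {y : En n | ‖y‖ < 1 ∧ ∀ j, y j ≠ x j} := by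
    apply IsOpen.measurableSet
    simp only [ne_eq, ofPred_and, ofPred_forall]
    exact (isOpen_lt continuous_norm continuous_const).inter
      (isOpen_iInter_of_finite fun j => isOpen_ne_fun (by fun_prop) continuous_const)
  have hne_line : ∀ {y : En n}, (∀ j, y j ≠ x j) → ∀ t : ℝ, y ≠ x + t • basisE n k :=
    fun h t => sub_ne_zero.1 (norm_pos_iff.1 (inv_dist_pow_le (by omega) h k t).1)
  have hbnd := integrable_weight_mul_maj (by omega : 2 ≤ n) hx
  have hψw : ∀ {y : En n} {g X : ℝ}, ‖y‖ < 1 → |g| ≤ X * (1 - ‖y‖ ^ 2) ^ (n - 1) →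
      ‖g • ψ y‖ ≤ X * M * (1 - ‖y‖ ^ 2) ^ n := by
    intro y g X hy hg
    rw [norm_smul, Real.norm_eq_abs]
    calc _ ≤ (X * (1 - ‖y‖ ^ 2) ^ (n - 1)) * (M * (1 - ‖y‖ ^ 2)) :=
          mul_le_mul hg (hψb y (mem_ball_zero_iff.2 hy)) (norm_nonneg _)
            ((abs_nonneg _).trans hg)
      _ = X * M * ((1 - ‖y‖ ^ 2) ^ (n - 1) * (1 - ‖y‖ ^ 2)) := by ring
      _ = _ := by rw [← pow_succ, Nat.sub_add_cancel (by omega)]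
  have hmeas : ∀ t : ℝ, |t| ≤ R - ‖x‖ →
      AEStronglyMeasurable (fun y => Gh n (x + t • basisE n k) y • ψ y) μ := by
    intro t ht
    rw [← Measure.restrict_eq_self_of_ae_mem hS]
    refine ContinuousOn.aestronglyMeasurable (ContinuousOn.fun_smul ?_ ?_) hSm
    · exact (continuousOn_Gh ((norm_line_le k ht).trans_lt hR)).mono
        fun y hy => ⟨hy.1, hne_line hy.2 t⟩
    · exact hψc.mono fun y hy => mem_ball_zero_iff.2 hy.1
  have hint : ∀ t : ℝ, |t| ≤ R - ‖x‖ →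
      Integrable (fun y => Gh n (x + t • basisE n k) y • ψ y) μ := by
    intro t ht
    refine (hbnd.const_mul (2 * kerC n R * M)).mono' (hmeas t ht) ?_
    filter_upwards [hS] with y hy
    have hc : 0 ≤ 1 - ‖y‖ ^ 2 := by nlinarith [norm_nonneg y, hy.1]
    have hm := maj_nonneg x y
    have hd : ‖y - x‖ ≤ 2 := by
      have := norm_sub_le y x
      linarith [hy.1]
    refine (hψw (X := kerC n R * (2 * maj x y)) hy.1 ?_).trans (le_of_eq (by ring))
    calc _ ≤ _ := abs_Gh_line_le hn hR hy.1 hy.2 k ht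
      _ ≤ kerC n R * (1 - ‖y‖ ^ 2) ^ (n - 1) * (2 * maj x y) := by gcongr
      _ = _ := by ring
  have hsmall : ∀ᶠ t : ℝ in nhdsWithin 0 {0}ᶜ, |t| ≤ R - ‖x‖ ∧ t ≠ 0 := by
    refine Filter.Eventually.and ?_ self_mem_nhdsWithin
    refine nhdsWithin_le_nhds ?_
    filter_upwards [ball_mem_nhds (0 : ℝ) hT] with t ht
    rw [mem_ball_zero_iff, Real.norm_eq_abs] at ht
    exact ht.le
  have h0 : |(0 : ℝ)| ≤ R - ‖x‖ := by rw [abs_zero]; exact hT.le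
  rw [hasDerivAt_iff_tendsto_slope]
  have hslope : ∀ᶠ t : ℝ in nhdsWithin 0 {0}ᶜ,
      ∫ y, slope (fun t : ℝ => Gh n (x + t • basisE n k) y • ψ y) 0 t ∂μ =
        slope (fun t : ℝ => GhInt n ψ (x + t • basisE n k)) 0 t := by
    filter_upwards [hsmall] with t ht
    simp only [slope_def_module, GhInt]
    rw [integral_smul, integral_sub (hint t ht.1) (hint 0 h0)]
  refine Filter.Tendsto.congr' hslope ?_
  refine tendsto_integral_filter_of_dominated_convergence
    (fun y => (2 ^ n * kerC n R * M) * ((1 - ‖y‖ ^ 2) ^ n * maj x y)) ?_ ?_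
    (hbnd.const_mul _) ?_
  · filter_upwards [hsmall] with t ht
    simp only [slope_def_module]
    exact ((hmeas t ht.1).sub (hmeas 0 h0)).const_smul (t - 0)⁻¹
  · filter_upwards [hsmall] with t ht
    filter_upwards [hS] with y hy
    rw [slope_def_module, ← sub_smul, smul_smul, sub_zero]
    refine (hψw (X := 2 ^ n * kerC n R * maj x y) hy.1 ?_).trans (le_of_eq (by ring))
    have h := abs_Gh_line_sub_le hn hR hy.1 hy.2 k ht.1
    rw [abs_mul, abs_inv, inv_mul_le_iff₀ (abs_pos.2 ht.2), zero_smul, add_zero]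
    exact h.trans (le_of_eq (by ring))
  · filter_upwards [hS] with y hy
    obtain ⟨G', h1, -⟩ := exists_hasDerivAt_Gh hn hR (norm_basisE k) (norm_line_le k h0) hy.1
      (hne_line hy.2 0)
    rw [h1.deriv]
    exact hasDerivAt_iff_tendsto_slope.1 (h1.smul_const (ψ y))
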